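/- Let q be a positive integer divisible by 4, N a positive integer divisible by 4, and c = 2c' with c' ∈ ℤ⁴. Then S_q(c) = Σ*_{a mod q} Σ_{b mod q, b∈(ℤ/q)⁴} e((a(F(b) − N) + b·c)/q) equals −4q² S(N, F(c'); q), where S(m,n;q) is the Kloosterman sum. -/

import Mathlib

open Finset

/-- `e(x) = exp(2πi x)`. -/
noncomputable def e (x : ℝ) : ℂ := Complex.exp (2 * Real.pi * Complex.I * x)

/-- The Kloosterman sum `S(m,n;q) = Σ_{x mod q, (x,q)=1} e((m x + n x̄)/q)`. -/
noncomputable def kloosterman (m n : ℤ) (q : ℕ) : ℂ :=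
  ∑ x ∈ (Finset.range q).filter (fun x => Nat.Coprime x q),
    e (((m * (x : ℤ) + n * ((((x : ZMod q)⁻¹).val : ℤ)) : ℤ) : ℝ) / q)

/-- The quadratic form `F(x) = x₁² + x₂² + x₃² + x₄²`. -/
def F (c : Fin 4 → ℤ) : ℤ := ∑ i, (c i) ^ 2

/-- The exponential sum `S_q(c) = Σ*_{a mod q} Σ_{b mod q, b ∈ (ℤ/q)⁴}
    e((a(F(b) - N) + b·c)/q)`. -/
noncomputable def Sq (q : ℕ) (N : ℤ) (c : Fin 4 → ℤ) : ℂ :=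
  ∑ a ∈ (Finset.range q).filter (fun a => Nat.Coprime a q),
    ∑ b : Fin 4 → Fin q,
      e ((((a : ℤ) * (F (fun i => ((b i : ℕ) : ℤ)) - N) +
            ∑ i, ((b i : ℕ) : ℤ) * c i : ℤ) : ℝ) / q)

/-!
Completing the square turns the sum over `b` into `e(-a⁻¹ F(c') / q) G(a)⁴`, where `G(a)` is the
quadratic Gauss sum, so everything rests on `G(a)⁴ = -4q²` for `4 ∣ q`. This is proved without
evaluating `G(a)`, by Schur's matrix argument. The normalised Fourier matrix `T` has trace
`G(a) / √q`, satisfies `T⁴ = 1`, and `T²` is the permutation matrix of `x ↦ -x`, with trace `2`.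
Counting eigenvalues gives `G(a) = √q (r + i s)` with `r` and `s` odd integers, while Weyl
differencing gives `|G(a)|² ≤ 2q`. Hence `r² = s² = 1` and `(r + i s)⁴ = -4`. What remains is
`-4q² Σ* e(-(a N + a⁻¹ F(c')) / q)`, and replacing `a` by `-a` makes it the Kloosterman sum.
-/

section Trace

variable {n K : Type*} [Fintype n] [Field K]

lemma exists_natCast_eq_trace_of_isIdempotentElem {E : Matrix n n K} (hE : IsIdempotentElem E) :
    ∃ k : ℕ, E.trace = k := by
  classical
  have hproj := LinearMap.IsIdempotentElem.isProj_range (Matrix.toLin' E)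
    (hE.map (Matrix.toLinAlgEquiv' (R := K)))
  exact ⟨_, (Matrix.trace_toLin'_eq E).symm.trans hproj.trace⟩

variable [DecidableEq n]

lemma exists_two_mul_natCast_eq_trace_sq_add_trace [NeZero (2 : K)] {M : Matrix n n K}
    (hM : M ^ 3 = M) : ∃ k : ℕ, (M ^ 2).trace + M.trace = 2 * k := by
  have h2 : (2 : K) ≠ 0 := NeZero.ne 2
  have hidem : IsIdempotentElem ((2 : K)⁻¹ • (M ^ 2 + M)) := by
    have hM4 : M ^ 4 = M ^ 2 := by rw [pow_succ, hM, sq]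
    have hsq : (M ^ 2 + M) * (M ^ 2 + M) = (2 : K) • (M ^ 2 + M) := by
      rw [show (M ^ 2 + M) * (M ^ 2 + M) = M ^ 4 + M ^ 3 + M ^ 3 + M ^ 2 by noncomm_ring,
        hM4, hM, two_smul]
      abel
    rw [IsIdempotentElem, smul_mul_smul_comm, hsq, smul_smul, mul_assoc, inv_mul_cancel₀ h2,
      mul_one]
  obtain ⟨k, hk⟩ := exists_natCast_eq_trace_of_isIdempotentElem hidem
  refine ⟨k, ?_⟩
  rw [← hk, Matrix.trace_smul, Matrix.trace_add, smul_eq_mul, mul_inv_cancel_left₀ h2]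

lemma exists_odd_intCast_eq_trace [NeZero (2 : K)] {M : Matrix n n K} (hM : M ^ 3 = M) {d : ℤ}
    (hd : Odd d) (htr : (M ^ 2).trace = d) : ∃ r : ℤ, Odd r ∧ M.trace = r := by
  obtain ⟨k, hk⟩ := exists_two_mul_natCast_eq_trace_sq_add_trace hM
  refine ⟨2 * k - d, (even_two_mul _).sub_odd hd, ?_⟩
  push_cast
  linear_combination hk - htr

lemma exists_odd_intCast_eq_trace_add_trace_pow_three [NeZero (2 : K)] {T : Matrix n n K}
    (hT : T ^ 4 = 1) {d : ℤ} (hd : Odd d) (htr : Fintype.card n + (T ^ 2).trace = 2 * d) :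
    ∃ r : ℤ, Odd r ∧ T.trace + (T ^ 3).trace = 2 * r := by
  have h2 : (2 : K) ≠ 0 := NeZero.ne 2
  have hT5 : T ^ 5 = T := by rw [pow_succ, hT, one_mul]
  have hT6 : T ^ 6 = T ^ 2 := by rw [pow_add T 4 2, hT, one_mul]
  have hsq : (T + T ^ 3) ^ 2 = (2 : K) • (1 + T ^ 2) := by
    rw [show (T + T ^ 3) ^ 2 = T ^ 2 + 2 * T ^ 4 + T ^ 6 by noncomm_ring, hT, hT6, two_smul]
    noncomm_ring
  have hmul : (1 + T ^ 2) * (T + T ^ 3) = (2 : K) • (T + T ^ 3) := by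
    rw [show (1 + T ^ 2) * (T + T ^ 3) = T + 2 * T ^ 3 + T ^ 5 by noncomm_ring, hT5, two_smul]
    noncomm_ring
  have hhalf_sq : ((2⁻¹ : K) • (T + T ^ 3)) ^ 2 = (2⁻¹ : K) • (1 + T ^ 2) := by
    rw [smul_pow, hsq, smul_smul, sq, mul_assoc, inv_mul_cancel₀ h2, mul_one]
  have hhalf_cube : ((2⁻¹ : K) • (T + T ^ 3)) ^ 3 = (2⁻¹ : K) • (T + T ^ 3) := by
    rw [pow_succ, hhalf_sq, smul_mul_smul_comm, hmul, smul_smul, mul_assoc, inv_mul_cancel₀ h2,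
      mul_one]
  have hhalf_trace : (((2⁻¹ : K) • (T + T ^ 3)) ^ 2).trace = d := by
    rw [hhalf_sq, Matrix.trace_smul, Matrix.trace_add, Matrix.trace_one, htr, smul_eq_mul,
      inv_mul_cancel_left₀ h2]
  obtain ⟨r, hr, hr_eq⟩ := exists_odd_intCast_eq_trace hhalf_cube hd hhalf_trace
  refine ⟨r, hr, ?_⟩
  rw [← hr_eq, Matrix.trace_smul, Matrix.trace_add, smul_eq_mul, mul_inv_cancel_left₀ h2]

/-- The eigenvalues of `T` are fourth roots of unity. Those equal to `±1` sum to the integer `r`,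
those equal to `±i` to `i s`, and `r` and `s` have the parities of the numbers of these
eigenvalues. -/
lemma exists_odd_trace_eq_add_mul_I {T : Matrix n n ℂ} (hT : T ^ 4 = 1)
    (hn : 4 ∣ Fintype.card n) (htr : (T ^ 2).trace = 2) :
    ∃ r s : ℤ, Odd r ∧ Odd s ∧ T.trace = r + s * Complex.I ∧
      (T ^ 3).trace = r - s * Complex.I := by
  obtain ⟨m, hm⟩ := hn
  have hcard : (Fintype.card n : ℂ) = 4 * m := by
    rw [hm]
    push_cast
    rfl
  obtain ⟨r, hr, hr_eq⟩ := exists_odd_intCast_eq_trace_add_trace_pow_three hT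
    (d := 2 * m + 1) (odd_two_mul_add_one _) (by
      rw [hcard, htr]
      push_cast
      ring)
  obtain ⟨s, hs, hs_eq⟩ := exists_odd_intCast_eq_trace_add_trace_pow_three
    (T := (-Complex.I) • T) (by
      rw [smul_pow, hT, Even.neg_pow (by decide), Complex.I_pow_four, one_smul])
    (d := 2 * m - 1) ((even_two_mul _).sub_odd odd_one) (by
      rw [smul_pow, Matrix.trace_smul, hcard, htr, neg_sq, Complex.I_sq]
      push_cast
      simp only [smul_eq_mul]
      ring)
  rw [smul_pow, Matrix.trace_smul, Matrix.trace_smul, smul_eq_mul, smul_eq_mul, neg_pow,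
    Complex.I_pow_three] at hs_eq
  refine ⟨r, s, hr, hs, ?_, ?_⟩
  · linear_combination hr_eq / 2 + Complex.I * hs_eq / 2 +
      (T.trace - (T ^ 3).trace) / 2 * Complex.I_sq
  · linear_combination hr_eq / 2 - Complex.I * hs_eq / 2 -
      (T.trace - (T ^ 3).trace) / 2 * Complex.I_sq

end Trace

section GaussSum

variable {R : Type*} [CommRing R] [Fintype R]

/-- The quadratic Gauss sum `∑ ψ(x²)` of an additive character. The sum `∑ e(a x² / q)` over
`x mod q` is the case of the character `x ↦ e(a x / q)` of `ZMod q`. -/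
def quadGaussSum {S : Type*} [CommRing S] (ψ : AddChar R S) : S := ∑ x, ψ (x ^ 2)

lemma sum_addChar_mul_sq_add_two_mul {S : Type*} [CommRing S] (ψ : AddChar R S) (u : Rˣ) (c : R) :
    ∑ x, ψ (u * x ^ 2 + 2 * c * x) = ψ (-(↑u⁻¹ * c ^ 2)) * quadGaussSum (ψ.mulShift u) := by
  have hu : (u : R) * ↑u⁻¹ = 1 := u.mul_inv
  simp only [quadGaussSum, AddChar.mulShift_apply, Finset.mul_sum, ← AddChar.map_add_eq_mul]
  refine Fintype.sum_equiv (Equiv.addRight (↑u⁻¹ * c)) _ _ fun x => ?_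
  rw [Equiv.coe_addRight]
  congr 1
  linear_combination -(2 * x * c + ↑u⁻¹ * c ^ 2) * hu

lemma addChar_map_sum_eq_prod {A M ι : Type*} [AddCommMonoid A] [CommMonoid M] (ψ : AddChar A M)
    (s : Finset ι) (f : ι → A) : ψ (∑ i ∈ s, f i) = ∏ i ∈ s, ψ (f i) :=
  map_prod ψ.toMonoidHom (fun i => Multiplicative.ofAdd (f i)) s

lemma sum_addChar_sum_mul_sq_add_two_mul {S ι : Type*} [CommRing S] [Fintype ι] [DecidableEq ι]
    (ψ : AddChar R S) (u : Rˣ) (c : ι → R) :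
    ∑ x : ι → R, ψ (∑ i, (u * x i ^ 2 + 2 * c i * x i)) =
      ψ (-(↑u⁻¹ * ∑ i, c i ^ 2)) * quadGaussSum (ψ.mulShift u) ^ Fintype.card ι := by
  simp only [addChar_map_sum_eq_prod, Finset.mul_sum, ← Finset.sum_neg_distrib]
  rw [← Fintype.prod_sum fun i x => ψ (u * x ^ 2 + 2 * c i * x)]
  simp only [sum_addChar_mul_sq_add_two_mul, Finset.prod_mul_distrib, Finset.prod_const,
    Finset.card_univ]

lemma isPrimitive_mulShift_unit {A M : Type*} [CommRing A] [CommMonoid M] {ψ : AddChar A M}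
    (hψ : ψ.IsPrimitive) (u : Aˣ) : (ψ.mulShift (u : A)).IsPrimitive := by
  intro a ha
  rw [AddChar.mulShift_mulShift]
  exact hψ (by simpa using ha)

/-- The matrix of the Fourier transform on functions on `R` attached to `ψ`, scaled so as to be
unitary when `ψ` is primitive. -/
noncomputable def fourierMatrix (ψ : AddChar R ℂ) : Matrix R R ℂ :=
  (√(Fintype.card R) : ℂ)⁻¹ • Matrix.of fun x y => ψ (x * y)

lemma sqrt_mul_trace_fourierMatrix (ψ : AddChar R ℂ) :
    √(Fintype.card R) * (fourierMatrix ψ).trace = quadGaussSum ψ := by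
  have hsqrt : (√(Fintype.card R) : ℂ) ≠ 0 := by simp
  rw [fourierMatrix, Matrix.trace_smul, smul_eq_mul, mul_inv_cancel_left₀ hsqrt]
  simp [Matrix.trace, quadGaussSum, sq]

lemma ofReal_sqrt_natCast_sq (n : ℕ) : (√n : ℂ) ^ 2 = n := by
  rw [← Complex.ofReal_pow, Real.sq_sqrt n.cast_nonneg, Complex.ofReal_natCast]

variable [DecidableEq R]

lemma quadGaussSum_mul_quadGaussSum_inv {S : Type*} [CommRing S] [IsDomain S] {ψ : AddChar R S}
    (hψ : ψ.IsPrimitive) :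
    quadGaussSum ψ * quadGaussSum ψ⁻¹ = Fintype.card R * ∑ h : R with -h = h, ψ (h ^ 2) := by
  calc quadGaussSum ψ * quadGaussSum ψ⁻¹
      = ∑ y, ∑ h, ψ ((h + y) ^ 2 - y ^ 2) := by
        simp only [quadGaussSum, Finset.mul_sum, Finset.sum_mul, AddChar.inv_apply,
          ← AddChar.map_add_eq_mul, ← sub_eq_add_neg]
        refine Finset.sum_congr rfl fun y _ => ?_
        exact (Equiv.sum_comp (Equiv.addRight y) fun x => ψ (x ^ 2 - y ^ 2)).symm
    _ = ∑ h, ψ (h ^ 2) * ∑ y, ψ (y * (2 * h)) := by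
        rw [Finset.sum_comm]
        simp only [Finset.mul_sum, ← AddChar.map_add_eq_mul]
        refine Finset.sum_congr rfl fun h _ => Finset.sum_congr rfl fun y _ => ?_
        congr 1
        ring
    _ = Fintype.card R * ∑ h : R with -h = h, ψ (h ^ 2) := by
        simp only [AddChar.sum_mulShift _ hψ, Finset.sum_filter, Finset.mul_sum,
          neg_eq_iff_add_eq_zero, ← two_mul]
        refine Finset.sum_congr rfl fun h _ => ?_
        split_ifs <;> simp [mul_comm]

lemma fourierMatrix_sq {ψ : AddChar R ℂ} (hψ : ψ.IsPrimitive) :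
    fourierMatrix ψ ^ 2 = (Equiv.neg R).permMatrix ℂ := by
  ext x z
  have hentry : ∑ y, ψ (x * y) * ψ (y * z) = if -x = z then (Fintype.card R : ℂ) else 0 := by
    simp only [← AddChar.map_add_eq_mul, mul_comm x, ← mul_add]
    simpa [neg_eq_iff_add_eq_zero] using AddChar.sum_mulShift (x + z) hψ
  rw [sq, fourierMatrix, smul_mul_smul_comm, ← mul_inv, ← sq, ofReal_sqrt_natCast_sq,
    Matrix.smul_apply, Matrix.mul_apply]
  simp only [Matrix.of_apply, hentry, smul_eq_mul, PEquiv.toMatrix_apply,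
    Equiv.toPEquiv_apply, Equiv.neg_apply, Option.mem_some_iff]
  split_ifs <;> simp

lemma fourierMatrix_pow_three {ψ : AddChar R ℂ} (hψ : ψ.IsPrimitive) :
    fourierMatrix ψ ^ 3 = fourierMatrix ψ⁻¹ := by
  rw [pow_succ, fourierMatrix_sq hψ, PEquiv.toMatrix_toPEquiv_mul]
  ext x y
  simp [fourierMatrix, AddChar.inv_apply]

lemma fourierMatrix_pow_four {ψ : AddChar R ℂ} (hψ : ψ.IsPrimitive) :
    fourierMatrix ψ ^ 4 = 1 := by
  rw [show 4 = 2 * 2 from rfl, pow_mul, fourierMatrix_sq hψ, sq, PEquiv.toMatrix_toPEquiv_mul]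
  ext x y
  simp [PEquiv.toMatrix_apply, Matrix.one_apply]

lemma exists_odd_quadGaussSum_eq {ψ : AddChar R ℂ} (hψ : ψ.IsPrimitive)
    (hcard : 4 ∣ Fintype.card R) (hneg : #{x : R | -x = x} = 2) :
    ∃ r s : ℤ, Odd r ∧ Odd s ∧ quadGaussSum ψ = √(Fintype.card R) * (r + s * Complex.I) ∧
      quadGaussSum ψ⁻¹ = √(Fintype.card R) * (r - s * Complex.I) := by
  have htr : (fourierMatrix ψ ^ 2).trace = 2 := by
    rw [fourierMatrix_sq hψ, Matrix.trace_permutation, ← Nat.cast_two, ← hneg,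
      ← Set.ncard_coe_finset]
    congr 2
    ext x
    simp [Function.IsFixedPt]
  obtain ⟨r, s, hr, hs, hrs, hrs'⟩ :=
    exists_odd_trace_eq_add_mul_I (fourierMatrix_pow_four hψ) hcard htr
  rw [fourierMatrix_pow_three hψ] at hrs'
  refine ⟨r, s, hr, hs, ?_, ?_⟩
  · rw [← sqrt_mul_trace_fourierMatrix, hrs]
  · rw [← sqrt_mul_trace_fourierMatrix, hrs']

theorem quadGaussSum_pow_four {ψ : AddChar R ℂ} (hψ : ψ.IsPrimitive)
    (hcard : 4 ∣ Fintype.card R) (hneg : #{x : R | -x = x} = 2) :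
    quadGaussSum ψ ^ 4 = -4 * (Fintype.card R : ℂ) ^ 2 := by
  obtain ⟨r, s, hr, hs, hG, hG'⟩ := exists_odd_quadGaussSum_eq hψ hcard hneg
  have hsqrt := ofReal_sqrt_natCast_sq (Fintype.card R)
  have hsum : ((r ^ 2 + s ^ 2 : ℤ) : ℂ) = ∑ h : R with -h = h, ψ (h ^ 2) := by
    refine mul_left_cancel₀ (Nat.cast_ne_zero.mpr (Fintype.card_ne_zero (α := R))) ?_
    rw [← quadGaussSum_mul_quadGaussSum_inv hψ, hG, hG']
    push_cast
    linear_combination Fintype.card R * s ^ 2 * Complex.I_sq -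
      (r ^ 2 - s ^ 2 * Complex.I ^ 2 : ℂ) * hsqrt
  have hle : r ^ 2 + s ^ 2 ≤ 2 := by
    have hnorm : ‖((r ^ 2 + s ^ 2 : ℤ) : ℂ)‖ ≤ 2 := by
      rw [hsum]
      refine (norm_sum_le _ _).trans_eq ?_
      simp only [AddChar.norm_apply, Finset.sum_const, hneg]
      norm_num
    rw [Complex.norm_intCast] at hnorm
    exact_mod_cast (le_abs_self _).trans hnorm
  have one_le_sq {t : ℤ} (ht : Odd t) : 1 ≤ t ^ 2 :=
    Int.add_one_le_of_lt (sq_pos_of_ne_zero fun h => by simp [h] at ht)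
  obtain ⟨hr_sq, hs_sq⟩ : (r ^ 2 : ℂ) = 1 ∧ (s ^ 2 : ℂ) = 1 := by
    norm_cast
    constructor <;> linarith [one_le_sq hr, one_le_sq hs]
  have hsq : (r + s * Complex.I) ^ 2 = 2 * r * s * Complex.I := by
    linear_combination s ^ 2 * Complex.I_sq + hr_sq - hs_sq
  calc quadGaussSum ψ ^ 4
      = ((√(Fintype.card R) : ℂ) ^ 2) ^ 2 * ((r + s * Complex.I) ^ 2) ^ 2 := by
        rw [hG]
        ring
    _ = -4 * (Fintype.card R : ℂ) ^ 2 := by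
        rw [hsqrt, hsq, mul_pow, mul_pow, mul_pow, Complex.I_sq, hr_sq, hs_sq]
        ring

end GaussSum

section ZMod

variable {q : ℕ} [NeZero q]

lemma card_filter_neg_eq_self_of_even (hq : Even q) : #{x : ZMod q | -x = x} = 2 := by
  obtain ⟨m, rfl⟩ := hq
  have hm : 0 < m := by have := NeZero.pos (m + m); omega
  have hval : (m : ZMod (m + m)).val = m := ZMod.val_cast_of_lt (by omega)
  have hpair : ({x : ZMod (m + m) | -x = x} : Finset _) = {0, (m : ZMod (m + m))} := by
    ext x
    simp only [Finset.mem_filter_univ, ZMod.neg_eq_self_iff, Finset.mem_insert,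
      Finset.mem_singleton]
    refine or_congr_right ⟨fun h => ZMod.val_injective _ ?_, ?_⟩
    · omega
    · rintro rfl
      omega
  rw [hpair, Finset.card_pair]
  intro h
  rw [← h, ZMod.val_zero] at hval
  omega

lemma quadGaussSum_mulShift_stdAddChar_pow_four (hq : 4 ∣ q) (u : (ZMod q)ˣ) :
    quadGaussSum (ZMod.stdAddChar.mulShift (u : ZMod q)) ^ 4 = -4 * (q : ℂ) ^ 2 := by
  have hprim := isPrimitive_mulShift_unit (ZMod.isPrimitive_stdAddChar q) u
  have heven : Even q := even_iff_two_dvd.mpr (.trans (by norm_num) hq)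
  rw [quadGaussSum_pow_four hprim (by rwa [ZMod.card]) (card_filter_neg_eq_self_of_even heven),
    ZMod.card]

lemma e_intCast_div (n : ℤ) : e ((n : ℝ) / q) = ZMod.stdAddChar (n : ZMod q) := by
  rw [ZMod.stdAddChar_coe, e]
  congr 1
  push_cast
  ring

lemma sum_range_filter_coprime {M : Type*} [AddCommMonoid M] (f : ZMod q → M) :
    ∑ a ∈ (range q).filter (fun a => Nat.Coprime a q), f a = ∑ u : (ZMod q)ˣ, f u := by
  refine Finset.sum_bij' (fun a ha => ZMod.unitOfCoprime a (Finset.mem_filter.mp ha).2)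
    (fun u _ => (u : ZMod q).val) ?_ ?_ ?_ ?_ ?_
  · simp
  · intro u _
    simpa [ZMod.val_lt] using ZMod.val_coe_unit_coprime u
  · intro a ha
    simpa using ZMod.val_cast_of_lt (Finset.mem_range.mp (Finset.mem_filter.mp ha).1)
  · intro u _
    ext
    simp
  · simp

lemma natCast_fin_bijective : Function.Bijective fun i : Fin q => ((i : ℕ) : ZMod q) := by
  refine (Fintype.bijective_iff_injective_and_card _).mpr ⟨fun i j hij => ?_, by simp⟩
  have hmod := (ZMod.natCast_eq_natCast_iff' _ _ _).mp hij
  rwa [Nat.mod_eq_of_lt i.isLt, Nat.mod_eq_of_lt j.isLt, Fin.val_inj] at hmod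

lemma sum_pi_natCast_fin {ι M : Type*} [Fintype ι] [DecidableEq ι] [AddCommMonoid M]
    (f : (ι → ZMod q) → M) :
    ∑ b : ι → Fin q, f (fun i => ((b i : ℕ) : ZMod q)) = ∑ x : ι → ZMod q, f x :=
  Fintype.sum_bijective _ (Function.Bijective.piMap fun _ => natCast_fin_bijective) _ _
    fun _ => rfl

lemma kloosterman_eq_sum_units (m n : ℤ) :
    kloosterman m n q = ∑ u : (ZMod q)ˣ, ZMod.stdAddChar (m * u + n * ↑u⁻¹ : ZMod q) := by
  simp only [kloosterman, e_intCast_div, ← ZMod.inv_coe_unit]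
  rw [← sum_range_filter_coprime fun x : ZMod q => ZMod.stdAddChar (m * x + n * x⁻¹ : ZMod q)]
  simp

lemma Sq_eq_sum_units (N : ℤ) (c : Fin 4 → ℤ) :
    Sq q N c = ∑ u : (ZMod q)ˣ, ZMod.stdAddChar (-(N * u) : ZMod q) *
      ∑ x : Fin 4 → ZMod q, ZMod.stdAddChar (∑ i, (u * x i ^ 2 + c i * x i : ZMod q)) := by
  simp only [Sq, e_intCast_div]
  rw [← sum_range_filter_coprime fun a : ZMod q => ZMod.stdAddChar (-(N * a) : ZMod q) *
    ∑ x : Fin 4 → ZMod q, ZMod.stdAddChar (∑ i, (a * x i ^ 2 + c i * x i : ZMod q))]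
  refine Finset.sum_congr rfl fun a _ => ?_
  rw [← sum_pi_natCast_fin, Finset.mul_sum]
  refine Finset.sum_congr rfl fun b _ => ?_
  rw [← AddChar.map_add_eq_mul]
  congr 1
  simp only [F, Fin.sum_univ_four]
  push_cast
  ring

end ZMod

theorem stmt_4_general (q : ℕ) (hq0 : 0 < q) (hq4 : 4 ∣ q) (N : ℤ) (c' : Fin 4 → ℤ) :
    Sq q N (fun i => 2 * c' i) = -4 * (q : ℂ) ^ 2 * kloosterman N (F c') q := by
  have : NeZero q := ⟨hq0.ne'⟩
  have hF : (F c' : ZMod q) = ∑ i, (c' i : ZMod q) ^ 2 := by simp [F]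
  have hinner (u : (ZMod q)ˣ) :
      ∑ x : Fin 4 → ZMod q, ZMod.stdAddChar (∑ i, (u * x i ^ 2 + (2 * c' i : ℤ) * x i : ZMod q)) =
        ZMod.stdAddChar (-(↑u⁻¹ * F c') : ZMod q) * (-4 * (q : ℂ) ^ 2) := by
    rw [hF, ← quadGaussSum_mulShift_stdAddChar_pow_four hq4 u]
    simpa using sum_addChar_sum_mul_sq_add_two_mul ZMod.stdAddChar u fun i => (c' i : ZMod q)
  rw [Sq_eq_sum_units, kloosterman_eq_sum_units, Finset.mul_sum,
    ← Equiv.sum_comp (Equiv.neg (ZMod q)ˣ)]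
  refine Finset.sum_congr rfl fun u _ => ?_
  rw [hinner, ← mul_assoc, ← AddChar.map_add_eq_mul, mul_comm]
  congr 2
  simp only [Equiv.neg_apply, Units.val_neg, inv_neg]
  ring

theorem stmt_4 (q N : ℕ) (hq0 : 0 < q) (hN0 : 0 < N) (hq4 : 4 ∣ q) (hN4 : 4 ∣ N)
    (c' : Fin 4 → ℤ) :
    Sq q (N : ℤ) (fun i => 2 * c' i) =
      -4 * (q : ℂ) ^ 2 * kloosterman (N : ℤ) (F c') q :=
  stmt_4_general q hq0 hq4 N c'
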